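/- Consider a minimum effort game with uniform budgets (B_v = 1 for every player v) in which every function h_e is convex. Then a strong equilibrium exists. Moreover, if every h_e is strictly convex, then every strong equilibrium s is integral: for every edge e = (u,v), min(s_u(e), s_v(e)) ∈ {0, 1}. -/

import Mathlib

open Finset

/-- A network contribution game on a finite simple undirected graph. -/
structure NCGame (V : Type) [Fintype V] [DecidableEq V] where
  /-- adjacency relation of the (simple, undirected) graph -/
  Adj : V → V → Prop
  adj_symm : ∀ u v, Adj u v → Adj v u
  adj_irrefl : ∀ v, ¬ Adj v v
  /-- budget of each player -/
  B : V → ℝ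
  B_nonneg : ∀ v, 0 ≤ B v
  /-- reward function of each edge; `f u v x y` is the reward of edge `(u,v)`
  when `u` contributes `x` and `v` contributes `y`. -/
  f : V → V → ℝ → ℝ → ℝ
  f_comm : ∀ u v x y, f u v x y = f v u x y
  f_symm : ∀ u v x y, f u v x y = f u v y x
  f_nonneg : ∀ u v x y, 0 ≤ x → 0 ≤ y → 0 ≤ f u v x y
  f_mono : ∀ u v y, 0 ≤ y → MonotoneOn (fun x => f u v x y) (Set.Ici 0)

variable {V : Type} [Fintype V] [DecidableEq V]

/-- A state: `s v u` is the effort player `v` puts on the edge `(v,u)`.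
It is valid if efforts are nonnegative, supported on edges, and within budget. -/
def validState (g : NCGame V) (s : V → V → ℝ) : Prop :=
  (∀ v u, 0 ≤ s v u) ∧ (∀ v u, ¬ g.Adj v u → s v u = 0) ∧
  (∀ v, ∑ u, s v u ≤ g.B v)

open Classical in
/-- utility of player `v` -/
noncomputable def util (g : NCGame V) (s : V → V → ℝ) (v : V) : ℝ :=
  ∑ u, if g.Adj v u then g.f v u (s v u) (s u v) else 0

/-- social welfare -/
noncomputable def welfare (g : NCGame V) (s : V → V → ℝ) : ℝ :=
  ∑ v, util g s v

/-- Nash equilibrium: no unilateral improving deviation. -/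
def IsNashEq (g : NCGame V) (s : V → V → ℝ) : Prop :=
  validState g s ∧
  ∀ v (t : V → ℝ), validState g (Function.update s v t) →
    util g (Function.update s v t) v ≤ util g s v

/-- Pairwise equilibrium: Nash and no bilateral improving deviation. -/
def IsPairwiseEq (g : NCGame V) (s : V → V → ℝ) : Prop :=
  IsNashEq g s ∧
  ∀ u v (tu tv : V → ℝ), u ≠ v →
    validState g (Function.update (Function.update s u tu) v tv) →
    ¬(util g s u < util g (Function.update (Function.update s u tu) v tv) u ∧
      util g s v < util g (Function.update (Function.update s u tu) v tv) v)

/-- Strong equilibrium: no coalition has a joint deviation strictly improving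
the utility of all its members. -/
def IsStrongEq (g : NCGame V) (s : V → V → ℝ) : Prop :=
  validState g s ∧
  ∀ (C : Finset V) (s' : V → V → ℝ), C.Nonempty → validState g s' →
    (∀ v, v ∉ C → s' v = s v) →
    ∃ v ∈ C, util g s' v ≤ util g s v

/-- class `C`: symmetric, nonnegative, nondecreasing, coordinate-convex. -/
def InClassC (f : ℝ → ℝ → ℝ) : Prop :=
  (∀ x y, 0 ≤ x → 0 ≤ y → 0 ≤ f x y) ∧
  (∀ x y, f x y = f y x) ∧
  (∀ y, 0 ≤ y → MonotoneOn (fun x => f x y) (Set.Ici 0)) ∧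
  (∀ y, 0 ≤ y → ConvexOn ℝ (Set.Ici 0) (fun x => f x y))

/-- class `C₀`: members of `C` vanishing when one argument is `0`. -/
def InClassC0 (f : ℝ → ℝ → ℝ) : Prop :=
  InClassC f ∧ ∀ x, 0 ≤ x → f x 0 = 0

/-- An edge is tight in `s` if both endpoints contribute `0` or their full budget. -/
def tightState (g : NCGame V) (s : V → V → ℝ) : Prop :=
  ∀ u v, g.Adj u v → s u v = 0 ∨ s u v = g.B u

/-!
Convexity and `h_e 0 = 0` put every reward below its chord: an edge on which the endpoints match
effort `m ∈ [0, 1]` pays at most `m` times its value `h_e 1`. Since a player matches total effort at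
most `1`, her utility is at most the largest value among the edges she uses.

*Existence.* Greedily matching along edges of maximal value gives a matching in which every edge
has an endpoint matched at least as well. Let matched players put their whole budget on their
partners. In an improving coalition, the member `v` whose matching edge has the largest value must
use some edge `vu` of larger value. By stability `u` is matched better than `v`, so `u` lies outside
the coalition and still plays its old strategy, which spends nothing on `v`.

*Integrality.* Take a fractional edge `ab` of maximal value. All edges used by `a` or by `b` are
fractional, so under strict convexity both earn strictly less than the value of `ab`, which they
would get by putting their whole budgets on `ab`.
-/

section StableInvolution

variable {α β : Type*}

lemma involutive_swap_comp [DecidableEq α] {τ : α → α} (hτ : Function.Involutive τ) {a b : α}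
    (ha : τ a = a) (hb : τ b = b) : Function.Involutive (Equiv.swap a b ∘ τ) := by
  intro v
  have hcomm : τ (Equiv.swap a b (τ v)) = Equiv.swap a b v := by
    rw [← hτ.injective.swap_apply, ha, hb, hτ]
  rw [Function.comp_apply, Function.comp_apply, hcomm, Equiv.swap_apply_self]

lemma swap_apply_of_fixed_of_ne [DecidableEq α] {τ : α → α} (hτ : Function.Injective τ) {a b v : α}
    (ha : τ a = a) (hb : τ b = b) (hva : v ≠ a) (hvb : v ≠ b) : Equiv.swap a b (τ v) = τ v := by
  have hswap := hτ.swap_apply a b v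
  rwa [ha, hb, Equiv.swap_apply_of_ne_of_ne hva hvb] at hswap

variable [LinearOrder β] {W : α → α → β}

lemma exists_involutive_stable_on (hW : ∀ u v, W u v = W v u) (S : Finset α) :
    ∃ σ : α → α, Function.Involutive σ ∧ (∀ v ∉ S, σ v = v) ∧
      ∀ u ∈ S, ∀ v ∈ S, W u v ≤ W u (σ u) ∨ W u v ≤ W v (σ v) := by
  classical
  induction S using Finset.strongInduction with
  | H S ih =>
    rcases S.eq_empty_or_nonempty with rfl | hne
    · exact ⟨id, fun _ => rfl, by simp, by simp⟩
    obtain ⟨⟨a, b⟩, hab, hmax⟩ :=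
      exists_max_image (S ×ˢ S) (fun p => W p.1 p.2) (hne.product hne)
    obtain ⟨haS, hbS⟩ := mem_product.1 hab
    have hssub : (S.erase a).erase b ⊂ S :=
      (erase_subset _ _).trans_ssubset (erase_ssubset haS)
    obtain ⟨τ, hτ, hfix, hstable⟩ := ih _ hssub
    have hτa : τ a = a := hfix a (by simp)
    have hτb : τ b = b := hfix b (by simp)
    have hσ_of_ne : ∀ v, v ≠ a → v ≠ b → Equiv.swap a b (τ v) = τ v := fun _ =>
      swap_apply_of_fixed_of_ne hτ.injective hτa hτb
    have hσ_value : ∀ v, v = a ∨ v = b → W v (Equiv.swap a b (τ v)) = W a b := by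
      rintro v (rfl | rfl)
      · rw [hτa, Equiv.swap_apply_left]
      · rw [hτb, Equiv.swap_apply_right, hW]
    refine ⟨Equiv.swap a b ∘ τ, involutive_swap_comp hτ hτa hτb, fun v hv => ?_,
      fun u hu v hv => ?_⟩
    · have hva : v ≠ a := fun h => hv (h ▸ haS)
      have hvb : v ≠ b := fun h => hv (h ▸ hbS)
      rw [Function.comp_apply, hσ_of_ne v hva hvb, hfix v (by simp [hv])]
    · simp only [Function.comp_apply]
      have hle : W u v ≤ W a b := hmax (u, v) (mem_product.2 ⟨hu, hv⟩)
      by_cases huab : u = a ∨ u = b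
      · exact .inl (hle.trans_eq (hσ_value u huab).symm)
      by_cases hvab : v = a ∨ v = b
      · exact .inr (hle.trans_eq (hσ_value v hvab).symm)
      push Not at huab hvab
      rw [hσ_of_ne u huab.1 huab.2, hσ_of_ne v hvab.1 hvab.2]
      exact hstable u (by simp [huab, hu]) v (by simp [hvab, hv])

lemma exists_involutive_stable [Finite α] (hW : ∀ u v, W u v = W v u) :
    ∃ σ : α → α, Function.Involutive σ ∧ ∀ u v, W u v ≤ W u (σ u) ∨ W u v ≤ W v (σ v) := by
  have := Fintype.ofFinite α
  obtain ⟨σ, hσ, -, hstable⟩ := exists_involutive_stable_on hW Finset.univ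
  exact ⟨σ, hσ, fun u v => hstable u (mem_univ u) v (mem_univ v)⟩

end StableInvolution

section Chord

variable {E : Type*} [AddCommGroup E] [Module ℝ E] {S : Set E} {φ : E → ℝ} {x : E} {t : ℝ}

lemma map_smul_le_of_convexOn (hφ : ConvexOn ℝ S φ) (hS : 0 ∈ S) (hφ0 : φ 0 = 0) (hx : x ∈ S)
    (ht : t ∈ Set.Icc (0 : ℝ) 1) : φ (t • x) ≤ t * φ x := by
  simpa [hφ0] using hφ.2 hS hx (sub_nonneg.2 ht.2) ht.1 (sub_add_cancel 1 t)

lemma map_smul_lt_of_strictConvexOn (hφ : StrictConvexOn ℝ S φ) (hS : 0 ∈ S) (hφ0 : φ 0 = 0)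
    (hx : x ∈ S) (hx0 : x ≠ 0) (ht : t ∈ Set.Ioo (0 : ℝ) 1) : φ (t • x) < t * φ x := by
  simpa [hφ0] using hφ.2 hS hx hx0.symm (sub_pos.2 ht.2) ht.1 (sub_add_cancel 1 t)

end Chord

namespace NCGame

/-- The reward of every edge lies below the chord of its diagonal: matching effort `m ∈ [0, 1]`
pays at most `m` times what two full unit efforts pay. Besides convex minimum effort games,
this covers for instance product rewards `f x y = x * y`. -/
def RewardsBelowChord (g : NCGame V) : Prop :=
  ∀ ⦃u v⦄, g.Adj u v → ∀ x ∈ Set.Icc (0 : ℝ) 1, ∀ y ∈ Set.Icc (0 : ℝ) 1,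
    g.f u v x y ≤ min x y * g.f u v 1 1

/-- The strict form of `RewardsBelowChord`, for matched efforts strictly between `0` and `1`. -/
def RewardsStrictlyBelowChord (g : NCGame V) : Prop :=
  ∀ ⦃u v⦄, g.Adj u v → ∀ x ∈ Set.Icc (0 : ℝ) 1, ∀ y ∈ Set.Icc (0 : ℝ) 1,
    min x y ∈ Set.Ioo (0 : ℝ) 1 → g.f u v x y < min x y * g.f u v 1 1

open Classical in
/-- The reward of the edge `uv` when both endpoints put a unit budget on it. Non-edges have value
`0`, which makes this a weight on all pairs of players. -/
noncomputable def edgeValue (g : NCGame V) (u v : V) : ℝ :=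
  if g.Adj u v then g.f u v 1 1 else 0

open Classical in
/-- The contribution of the pair `vu` to the utility of `v` in the state `s`. -/
noncomputable def edgeReward (g : NCGame V) (s : V → V → ℝ) (v u : V) : ℝ :=
  if g.Adj v u then g.f v u (s v u) (s u v) else 0

open Classical in
/-- The state in which every player adjacent to her partner under `σ` puts a unit effort on that
edge; all other efforts are `0`. -/
noncomputable def matchingState (g : NCGame V) (σ : V → V) (v : V) : V → ℝ :=
  if g.Adj v (σ v) then Pi.single (σ v) 1 else 0

end NCGame

open NCGame

section MinimumEffort

variable {g : NCGame V} {h : V → V → ℝ → ℝ}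

lemma rewardsBelowChord_of_convexOn
    (hmin : ∀ u v, g.Adj u v → ∀ x y, g.f u v x y = h u v (min x y))
    (h0 : ∀ u v, g.Adj u v → h u v 0 = 0)
    (hconv : ∀ u v, g.Adj u v → ConvexOn ℝ (Set.Ici 0) (h u v)) : g.RewardsBelowChord := by
  intro u v huv x hx y hy
  have hm : min x y ∈ Set.Icc (0 : ℝ) 1 := ⟨le_min hx.1 hy.1, min_le_of_left_le hx.2⟩
  simpa [hmin u v huv] using
    map_smul_le_of_convexOn (hconv u v huv) Set.self_mem_Ici (h0 u v huv)
      (Set.mem_Ici.2 zero_le_one) hm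

lemma rewardsStrictlyBelowChord_of_strictConvexOn
    (hmin : ∀ u v, g.Adj u v → ∀ x y, g.f u v x y = h u v (min x y))
    (h0 : ∀ u v, g.Adj u v → h u v 0 = 0)
    (hconv : ∀ u v, g.Adj u v → StrictConvexOn ℝ (Set.Ici 0) (h u v)) :
    g.RewardsStrictlyBelowChord := by
  intro u v huv x _ y _ hm
  simpa [hmin u v huv] using
    map_smul_lt_of_strictConvexOn (hconv u v huv) Set.self_mem_Ici (h0 u v huv)
      (Set.mem_Ici.2 zero_le_one) one_ne_zero hm

end MinimumEffort

section Game

variable {g : NCGame V} {s : V → V → ℝ} {σ : V → V} {a b u v : V} {p : ℝ}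

lemma edgeValue_of_adj (huv : g.Adj u v) : g.edgeValue u v = g.f u v 1 1 := if_pos huv

lemma edgeValue_comm (u v : V) : g.edgeValue u v = g.edgeValue v u := by
  classical exact if_congr ⟨g.adj_symm u v, g.adj_symm v u⟩ (g.f_comm u v 1 1) rfl

lemma edgeValue_nonneg (u v : V) : 0 ≤ g.edgeValue u v := by
  unfold edgeValue
  split_ifs
  exacts [g.f_nonneg u v 1 1 zero_le_one zero_le_one, le_rfl]

lemma edgeReward_of_adj (hvu : g.Adj v u) : g.edgeReward s v u = g.f v u (s v u) (s u v) :=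
  if_pos hvu

lemma util_eq_sum_edgeReward (g : NCGame V) (s : V → V → ℝ) (v : V) :
    util g s v = ∑ u, g.edgeReward s v u := rfl

namespace validState

lemma nonneg (hs : validState g s) (v u : V) : 0 ≤ s v u := hs.1 v u

lemma min_nonneg (hs : validState g s) (v u : V) : 0 ≤ min (s v u) (s u v) :=
  le_min (hs.nonneg v u) (hs.nonneg u v)

lemma adj_of_min_pos (hs : validState g s) (hpos : 0 < min (s v u) (s u v)) : g.Adj v u := by
  by_contra hvu
  exact (lt_min_iff.1 hpos).1.ne' (hs.2.1 v u hvu)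

lemma mem_Icc (hB : ∀ v, g.B v = 1) (hs : validState g s) (v u : V) :
    s v u ∈ Set.Icc (0 : ℝ) 1 :=
  ⟨hs.nonneg v u, (single_le_sum (fun w _ => hs.nonneg v w) (mem_univ u)).trans
    ((hs.2.2 v).trans_eq (hB v))⟩

lemma sum_min_le_one (hB : ∀ v, g.B v = 1) (hs : validState g s) (v : V) :
    ∑ u, min (s v u) (s u v) ≤ 1 :=
  (sum_le_sum fun _ _ => min_le_left _ _).trans ((hs.2.2 v).trans_eq (hB v))

lemma min_lt_one_of_min_mem_Ioo (hB : ∀ v, g.B v = 1) (hs : validState g s)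
    (hvu : min (s v u) (s u v) ∈ Set.Ioo (0 : ℝ) 1) (w : V) : min (s v w) (s w v) < 1 := by
  rcases eq_or_ne w u with rfl | hwu
  · exact hvu.2
  · have hpair : min (s v w) (s w v) + min (s v u) (s u v) ≤ ∑ z, min (s v z) (s z v) :=
      add_le_sum (f := fun z => min (s v z) (s z v)) (fun z _ => hs.min_nonneg v z)
        (mem_univ w) (mem_univ u) hwu
    linarith [hs.sum_min_le_one hB v, hvu.1]

lemma edgeReward_nonneg (hs : validState g s) (v u : V) : 0 ≤ g.edgeReward s v u := by
  unfold edgeReward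
  split_ifs
  exacts [g.f_nonneg v u _ _ (hs.nonneg v u) (hs.nonneg u v), le_rfl]

lemma util_nonneg (hs : validState g s) (v : V) : 0 ≤ util g s v :=
  sum_nonneg fun u _ => hs.edgeReward_nonneg v u

lemma edgeValue_le_util (hs : validState g s) (hvu : g.Adj v u) (hv : s v u = 1)
    (hu : s u v = 1) : g.edgeValue v u ≤ util g s v :=
  calc g.edgeValue v u = g.edgeReward s v u := by
        rw [edgeValue_of_adj hvu, edgeReward_of_adj hvu, hv, hu]
    _ ≤ util g s v := single_le_sum (fun w _ => hs.edgeReward_nonneg v w) (mem_univ u)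

lemma edgeReward_le_min_mul_edgeValue (hB : ∀ v, g.B v = 1) (hchord : g.RewardsBelowChord)
    (hs : validState g s) (v u : V) :
    g.edgeReward s v u ≤ min (s v u) (s u v) * g.edgeValue v u := by
  by_cases hvu : g.Adj v u
  · rw [edgeReward_of_adj hvu, edgeValue_of_adj hvu]
    exact hchord hvu _ (hs.mem_Icc hB v u) _ (hs.mem_Icc hB u v)
  · simp [edgeReward, edgeValue, hvu]

lemma edgeReward_lt_min_mul_edgeValue (hB : ∀ v, g.B v = 1)
    (hstrict : g.RewardsStrictlyBelowChord) (hs : validState g s)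
    (hm : min (s v u) (s u v) ∈ Set.Ioo (0 : ℝ) 1) :
    g.edgeReward s v u < min (s v u) (s u v) * g.edgeValue v u := by
  have hvu := hs.adj_of_min_pos hm.1
  rw [edgeReward_of_adj hvu, edgeValue_of_adj hvu]
  exact hstrict hvu _ (hs.mem_Icc hB v u) _ (hs.mem_Icc hB u v) hm

lemma edgeReward_le_min_mul (hB : ∀ v, g.B v = 1) (hchord : g.RewardsBelowChord)
    (hs : validState g s) (hp : 0 < min (s v u) (s u v) → g.edgeValue v u ≤ p) :
    g.edgeReward s v u ≤ min (s v u) (s u v) * p := by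
  refine (hs.edgeReward_le_min_mul_edgeValue hB hchord v u).trans ?_
  rcases (hs.min_nonneg v u).eq_or_lt with hzero | hpos
  · simp only [← hzero, zero_mul, le_refl]
  · exact mul_le_mul_of_nonneg_left (hp hpos) hpos.le

lemma sum_min_mul_le (hB : ∀ v, g.B v = 1) (hs : validState g s) (hp : 0 ≤ p) (v : V) :
    ∑ u, min (s v u) (s u v) * p ≤ p := by
  rw [← sum_mul]
  exact mul_le_of_le_one_left hp (hs.sum_min_le_one hB v)

lemma exists_lt_edgeValue_of_lt_util (hB : ∀ v, g.B v = 1) (hchord : g.RewardsBelowChord)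
    (hs : validState g s) (hp : 0 ≤ p) (hlt : p < util g s v) :
    ∃ u, 0 < min (s v u) (s u v) ∧ p < g.edgeValue v u := by
  by_contra! hle
  have hutil : util g s v ≤ ∑ u, min (s v u) (s u v) * p :=
    sum_le_sum fun u _ => hs.edgeReward_le_min_mul hB hchord (hle u)
  exact hlt.not_ge (hutil.trans (hs.sum_min_mul_le hB hp v))

lemma util_lt_edgeValue_of_forall_le (hB : ∀ v, g.B v = 1) (hchord : g.RewardsBelowChord)
    (hstrict : g.RewardsStrictlyBelowChord) (hs : validState g s)
    (hab : min (s a b) (s b a) ∈ Set.Ioo (0 : ℝ) 1)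
    (hmax : ∀ u, min (s a u) (s u a) ∈ Set.Ioo (0 : ℝ) 1 → g.edgeValue a u ≤ g.edgeValue a b) :
    util g s a < g.edgeValue a b :=
  calc util g s a < ∑ u, min (s a u) (s u a) * g.edgeValue a b := by
        rw [util_eq_sum_edgeReward]
        refine sum_lt_sum (fun u _ => hs.edgeReward_le_min_mul hB hchord fun hpos => ?_)
          ⟨b, mem_univ b, hs.edgeReward_lt_min_mul_edgeValue hB hstrict hab⟩
        exact hmax u ⟨hpos, hs.min_lt_one_of_min_mem_Ioo hB hab u⟩
    _ ≤ g.edgeValue a b := hs.sum_min_mul_le hB (edgeValue_nonneg a b) a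

lemma update_single (hB : ∀ v, g.B v = 1) (hs : validState g s) (hvu : g.Adj v u) :
    validState g (Function.update s v (Pi.single u 1)) := by
  refine ⟨fun w z => ?_, fun w z hwz => ?_, fun w => ?_⟩ <;>
    rcases eq_or_ne w v with rfl | hwv
  · have hsingle : (0 : V → ℝ) ≤ Pi.single u 1 := Pi.single_nonneg.2 zero_le_one
    rw [Function.update_self]
    exact hsingle z
  · rw [Function.update_of_ne hwv]
    exact hs.nonneg w z
  · have hzu : z ≠ u := fun h => hwz (h ▸ hvu)
    rw [Function.update_self, Pi.single_eq_of_ne hzu]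
  · rw [Function.update_of_ne hwv]
    exact hs.2.1 w z hwz
  · simp [hB]
  · rw [Function.update_of_ne hwv]
    exact hs.2.2 w

end validState

lemma IsStrongEq.isPairwiseEq (hs : IsStrongEq g s) : IsPairwiseEq g s := by
  refine ⟨⟨hs.1, fun v t ht => ?_⟩, fun u v tu tv _ ht => ?_⟩
  · obtain ⟨w, hw, hle⟩ := hs.2 {v} _ (singleton_nonempty v) ht fun w hw =>
      Function.update_of_ne (by simpa using hw) _ _
    rwa [mem_singleton.1 hw] at hle
  · rintro ⟨hu, hv⟩
    obtain ⟨w, hw, hle⟩ := hs.2 {u, v} _ (insert_nonempty u {v}) ht fun w hw => by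
      have hwuv : w ≠ u ∧ w ≠ v := by simpa using hw
      rw [Function.update_of_ne hwuv.2, Function.update_of_ne hwuv.1]
    rcases mem_insert.1 hw with rfl | hwv
    · exact hle.not_gt hu
    · exact hle.not_gt (mem_singleton.1 hwv ▸ hv)

lemma validState_matchingState (hB : ∀ v, g.B v = 1) (σ : V → V) :
    validState g (g.matchingState σ) := by
  refine ⟨fun v u => ?_, fun v u hvu => ?_, fun v => ?_⟩ <;>
    by_cases hv : g.Adj v (σ v) <;> simp only [matchingState, hv, if_true, if_false]
  · have hsingle : (0 : V → ℝ) ≤ Pi.single (σ v) 1 := Pi.single_nonneg.2 zero_le_one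
    exact hsingle u
  · exact le_rfl
  · have hne : u ≠ σ v := fun h => hvu (h ▸ hv)
    exact Pi.single_eq_of_ne hne 1
  · rfl
  · simp [hB]
  · simp [hB]

lemma matchingState_apply_partner (hv : g.Adj v (σ v)) : g.matchingState σ v (σ v) = 1 := by
  simp [matchingState, hv]

lemma eq_of_matchingState_pos (hpos : 0 < g.matchingState σ u v) : σ u = v := by
  by_contra hne
  refine hpos.ne' ?_
  by_cases hu : g.Adj u (σ u) <;> simp [matchingState, hu, Ne.symm hne]

lemma edgeValue_le_util_matchingState (hB : ∀ v, g.B v = 1) (hσ : Function.Involutive σ) (v : V) :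
    g.edgeValue v (σ v) ≤ util g (g.matchingState σ) v := by
  have hvalid := validState_matchingState hB σ
  by_cases hv : g.Adj v (σ v)
  · have hpartner : g.matchingState σ (σ v) v = 1 := by
      have hadj : g.Adj (σ v) (σ (σ v)) := by
        rw [hσ v]
        exact g.adj_symm v (σ v) hv
      simpa only [hσ v] using matchingState_apply_partner hadj
    exact hvalid.edgeValue_le_util hv (matchingState_apply_partner hv) hpartner
  · exact (if_neg hv).trans_le (hvalid.util_nonneg v)

lemma isStrongEq_matchingState (hB : ∀ v, g.B v = 1) (hchord : g.RewardsBelowChord)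
    (hσ : Function.Involutive σ)
    (hstable : ∀ u v, g.edgeValue u v ≤ g.edgeValue u (σ u) ∨
      g.edgeValue u v ≤ g.edgeValue v (σ v)) :
    IsStrongEq g (g.matchingState σ) := by
  refine ⟨validState_matchingState hB σ, fun C s hC hs hout => ?_⟩
  by_contra! himp
  obtain ⟨v, hvC, hvmax⟩ := exists_max_image C (fun v => g.edgeValue v (σ v)) hC
  have hgain : g.edgeValue v (σ v) < util g s v :=
    (edgeValue_le_util_matchingState hB hσ v).trans_lt (himp v hvC)
  obtain ⟨u, hpos, hbetter⟩ :=
    hs.exists_lt_edgeValue_of_lt_util hB hchord (edgeValue_nonneg v (σ v)) hgain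
  have hu : g.edgeValue v u ≤ g.edgeValue u (σ u) := (hstable v u).resolve_left hbetter.not_ge
  have huC : u ∉ C := fun huC => (hbetter.trans_le hu).not_ge (hvmax u huC)
  have hσu : σ u = v := eq_of_matchingState_pos (hout u huC ▸ (lt_min_iff.1 hpos).2)
  exact hbetter.ne (by rw [← hσu, hσ u])

lemma IsPairwiseEq.edgeValue_le_util_or (hB : ∀ v, g.B v = 1) (hs : IsPairwiseEq g s)
    (hab : g.Adj a b) : g.edgeValue a b ≤ util g s a ∨ g.edgeValue a b ≤ util g s b := by
  have hne : a ≠ b := fun h => g.adj_irrefl b (h ▸ hab)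
  have hba : g.Adj b a := g.adj_symm a b hab
  set s' := Function.update (Function.update s a (Pi.single b 1)) b (Pi.single a 1) with hs'
  have hvalid : validState g s' := (hs.1.1.update_single hB hab).update_single hB hba
  have hs'ab : s' a b = 1 := by simp [hs', Function.update_of_ne hne]
  have hs'ba : s' b a = 1 := by simp [hs']
  by_contra! hlt
  refine hs.2 a b _ _ hne hvalid ⟨hlt.1.trans_le ?_, hlt.2.trans_le ?_⟩
  · exact hvalid.edgeValue_le_util hab hs'ab hs'ba
  · rw [edgeValue_comm]
    exact hvalid.edgeValue_le_util hba hs'ba hs'ab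

lemma IsPairwiseEq.min_notMem_Ioo (hB : ∀ v, g.B v = 1) (hchord : g.RewardsBelowChord)
    (hstrict : g.RewardsStrictlyBelowChord) (hs : IsPairwiseEq g s) (u v : V) :
    min (s u v) (s v u) ∉ Set.Ioo (0 : ℝ) 1 := by
  intro huv
  have hvalid := hs.1.1
  obtain ⟨⟨a, b⟩, hab, hmax⟩ := Set.exists_max_image
    {e : V × V | min (s e.1 e.2) (s e.2 e.1) ∈ Set.Ioo (0 : ℝ) 1}
    (fun e => g.edgeValue e.1 e.2) (Set.toFinite _) ⟨(u, v), huv⟩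
  have hba : min (s b a) (s a b) ∈ Set.Ioo (0 : ℝ) 1 := min_comm (s a b) (s b a) ▸ hab
  have ha : util g s a < g.edgeValue a b :=
    hvalid.util_lt_edgeValue_of_forall_le hB hchord hstrict hab fun w hw => hmax (a, w) hw
  have hb : util g s b < g.edgeValue a b := by
    rw [edgeValue_comm]
    exact hvalid.util_lt_edgeValue_of_forall_le hB hchord hstrict hba fun w hw =>
      (hmax (b, w) hw).trans_eq (edgeValue_comm a b)
  rcases hs.edgeValue_le_util_or hB (hvalid.adj_of_min_pos hab.1) with hle | hle
  · exact hle.not_gt ha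
  · exact hle.not_gt hb

end Game

theorem min_effort_convex_uniform_strong_general (g : NCGame V) (hB : ∀ v, g.B v = 1)
    (hchord : g.RewardsBelowChord) :
    (∃ s, IsStrongEq g s) ∧
    (g.RewardsStrictlyBelowChord → ∀ s, IsPairwiseEq g s → ∀ u v,
      min (s u v) (s v u) = 0 ∨ min (s u v) (s v u) = 1) := by
  constructor
  · obtain ⟨σ, hσ, hstable⟩ := exists_involutive_stable (edgeValue_comm (g := g))
    exact ⟨g.matchingState σ, isStrongEq_matchingState hB hchord hσ hstable⟩
  · intro hstrict s hs u v
    have hvalid := hs.1.1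
    by_contra! hne
    exact hs.min_notMem_Ioo hB hchord hstrict u v
      ⟨(hvalid.min_nonneg u v).lt_of_ne' hne.1,
        (min_le_of_left_le (hvalid.mem_Icc hB u v).2).lt_of_ne hne.2⟩

/-- minimum effort games with uniform budgets and convex `h_e`
possess a strong equilibrium; with strictly convex `h_e` every strong
equilibrium is integral. -/
theorem min_effort_convex_uniform_strong (g : NCGame V)
    (hB : ∀ v, g.B v = 1)
    (h : V → V → ℝ → ℝ)
    (hmin : ∀ u v, g.Adj u v → ∀ x y, g.f u v x y = h u v (min x y))
    (hmono : ∀ u v, g.Adj u v → MonotoneOn (h u v) (Set.Ici 0))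
    (h0 : ∀ u v, g.Adj u v → h u v 0 = 0)
    (hconv : ∀ u v, g.Adj u v → ConvexOn ℝ (Set.Ici 0) (h u v)) :
    (∃ s, IsStrongEq g s) ∧
    ((∀ u v, g.Adj u v → StrictConvexOn ℝ (Set.Ici 0) (h u v)) →
      ∀ s, IsStrongEq g s → ∀ u v, g.Adj u v →
        min (s u v) (s v u) = 0 ∨ min (s u v) (s v u) = 1) := by
  obtain ⟨hexists, hintegral⟩ := min_effort_convex_uniform_strong_general g hB
    (rewardsBelowChord_of_convexOn hmin h0 hconv)
  exact ⟨hexists, fun hstrict s hs u v _ => hintegral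
    (rewardsStrictlyBelowChord_of_strictConvexOn hmin h0 hstrict) s hs.isPairwiseEq u v⟩
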